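/- Fix a positive integer k and assume ∫_1^∞ Δ_k(x)² x^{-2} dx < ∞. Then lim_{N→∞} ∫_1^∞ |Δ_k(x) − Σ_{n=0}^N (-1)^n ℓ_{n,k} L_n(log x)|² x^{-2} dx = 0; that is, the Fourier–Laguerre expansion Δ_k(x) = Σ_{n=0}^∞ (-1)^n ℓ_{n,k} L_n(log x) holds in the weighted L² sense on (1,∞) with weight x^{-2}. -/

import Mathlib

open scoped Real Topology
open Complex Filter MeasureTheory Finset Asymptotics

/-- The analytic extension of `s ↦ ((s-1) * ζ(s))^k` to `s = 1` (where its value is `1`). -/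
noncomputable def zetaPowAux (k : ℕ) : ℂ → ℂ :=
  Function.update (fun s : ℂ => ((s - 1) * riemannZeta s) ^ k) 1 1

/-- `lam k j` is the Taylor coefficient `λ_{j,k}`, i.e. the `j`-th derivative at `s = 1` of the
analytic extension of `(s-1)^k ζ(s)^k`; these numbers are real, and we record their real part. -/
noncomputable def lam (k j : ℕ) : ℝ :=
  (iteratedDeriv j (zetaPowAux k) 1).re

/-- The Fourier coefficients `ℓ_{n,k}` for `n ≥ -k` (an integer index). -/
noncomputable def ell (k : ℕ) (n : ℤ) : ℝ :=
  if 1 ≤ n then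
    (-1 : ℝ) ^ n.toNat *
      ∑ j ∈ Finset.Icc 1 n.toNat,
        ((n.toNat - 1).choose (j - 1) : ℝ) * lam k (j + k) / (Nat.factorial (j + k))
  else
    (-1 : ℝ) ^ k *
      ∑ j ∈ Finset.range ((k + n).toNat + 1),
        ((k - j).choose (-n).toNat : ℝ) * (-1 : ℝ) ^ j * lam k j / (Nat.factorial j)

/-- The Lindelöf Hypothesis: `ζ(1/2 + it) = O(|t|^ε)` for every `ε > 0`. -/
def LindelofHypothesis : Prop :=
  ∀ ε : ℝ, 0 < ε → ∃ C : ℝ, ∀ t : ℝ, 1 ≤ |t| →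
    ‖riemannZeta (1 / 2 + t * Complex.I)‖ ≤ C * |t| ^ ε

/-- `dk k n` is the Piltz divisor function `d_k(n)`: the number of representations of `n` as an
ordered product of `k` positive integers (the `k`-th Dirichlet-convolution power of `ζ`). -/
noncomputable def dk (k n : ℕ) : ℕ := (ArithmeticFunction.zeta ^ k) n

/-- The coefficients `a_{j,k}` of the polynomial `P_k`. -/
noncomputable def aCoef (k j : ℕ) : ℝ :=
  (-1 : ℝ) ^ (k - 1 - j) *
    ∑ i ∈ Finset.range (k - 1 - j + 1), (-1 : ℝ) ^ i * lam k i / (Nat.factorial i)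

/-- The error term `Δ_k(x) = (Σ_{1 ≤ n ≤ x} d_k(n)) - x P_k(log x)` in the Piltz divisor
problem. -/
noncomputable def Deltak (k : ℕ) (x : ℝ) : ℝ :=
  (∑ n ∈ Finset.Icc 1 ⌊x⌋₊, (dk k n : ℝ)) -
    x * ∑ j ∈ Finset.range k, aCoef k j / (Nat.factorial j) * (Real.log x) ^ j

/-- The `n`-th Laguerre polynomial. -/
noncomputable def laguerre (n : ℕ) (u : ℝ) : ℝ :=
  ∑ j ∈ Finset.range (n + 1), (n.choose j : ℝ) * (-1 : ℝ) ^ j * u ^ j / (Nat.factorial j)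

/-- The Bessel function of the first kind of order `0`. -/
noncomputable def besselJ0 (u : ℝ) : ℝ :=
  ∑' m : ℕ, (-1 : ℝ) ^ m * (u / 2) ^ (2 * m) / ((Nat.factorial m : ℝ) ^ 2)

/-- `φ_k(x) = ∫_1^∞ Δ_k(r) J₀(2 √(x log r)) r⁻² dr`. -/
noncomputable def phik (k : ℕ) (x : ℝ) : ℝ :=
  ∫ r in Set.Ioi (1 : ℝ), Deltak k r * besselJ0 (2 * Real.sqrt (x * Real.log r)) / r ^ 2

/-!
Substituting `x = exp u` turns `L²((1, ∞), x⁻² dx)` into `L²` of the exponential distribution of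
rate one. There the Laguerre polynomials are orthonormal, and they are complete: if `f` is
orthogonal to all of them, then its positive and negative parts are densities with the same
moments, and two measures with finite exponential moments near `0` and the same moments have
complex moment generating functions that agree near `0`, hence on the imaginary axis by analytic
continuation, so the measures coincide.

The Laguerre coefficients of `Δ_k(exp u)` are the binomial transform of the Taylor coefficients of
its Laplace transform `∫ exp (-(1 + w) u) Δ_k(exp u) du`. Summing by parts, this is the difference
between `ζ(1 + w)^k / (1 + w)` and the polar part `∑ j < k, a_{j,k} / w^(j + 1)` of that function at
`w = 0`, so its Taylor coefficients are known in terms of the `λ_{i,k}`, and one application of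
Pascal's rule turns their binomial transform into `(-1)^n ℓ_{n,k}`.
-/

section Moments

open ProbabilityTheory

section WithDensity

variable {α : Type*} {mα : MeasurableSpace α} {μ : Measure α} {f g : α → ℝ}

theorem integral_withDensity_ofReal (hf : AEMeasurable f μ) :
    ∫ a, g a ∂μ.withDensity (fun a => ENNReal.ofReal (f a)) = ∫ a, max (f a) 0 * g a ∂μ := by
  rw [integral_withDensity_eq_integral_toReal_smul₀ hf.ennreal_ofReal (by simp)]
  simp only [ENNReal.toReal_ofReal', smul_eq_mul]

theorem integrable_withDensity_ofReal (hf : MemLp f 2 μ) (hg : MemLp g 2 μ) :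
    Integrable g (μ.withDensity fun a => ENNReal.ofReal (f a)) := by
  rw [integrable_withDensity_iff_integrable_smul₀' hf.aemeasurable.ennreal_ofReal (by simp)]
  simpa only [ENNReal.toReal_ofReal', smul_eq_mul] using! hf.pos_part.integrable_mul hg

theorem integral_mul_eq_integral_withDensity_sub (hf : MemLp f 2 μ) (hg : MemLp g 2 μ) :
    ∫ a, g a * f a ∂μ = ∫ a, g a ∂μ.withDensity (fun a => ENNReal.ofReal (f a)) -
      ∫ a, g a ∂μ.withDensity (fun a => ENNReal.ofReal (-f a)) := by
  have hneg : MemLp (fun a => -f a) 2 μ := hf.neg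
  rw [integral_withDensity_ofReal hf.aemeasurable, integral_withDensity_ofReal hneg.aemeasurable]
  refine Eq.trans ?_
    (integral_sub (hf.pos_part.integrable_mul hg) (hneg.pos_part.integrable_mul hg))
  simp only [← sub_mul, max_zero_sub_max_neg_zero_eq_self, mul_comm (g _)]

theorem ae_eq_zero_of_withDensity_eq_withDensity_neg [SigmaFinite μ] (hf : AEMeasurable f μ)
    (h : μ.withDensity (fun a => ENNReal.ofReal (f a)) =
      μ.withDensity fun a => ENNReal.ofReal (-f a)) : f =ᵐ[μ] 0 := by
  have hneg : AEMeasurable (fun a => -f a) μ := hf.neg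
  rw [withDensity_eq_iff_of_sigmaFinite hf.ennreal_ofReal hneg.ennreal_ofReal] at h
  filter_upwards [h] with a ha
  rcases le_total (f a) 0 with hle | hle
  · rw [ENNReal.ofReal_of_nonpos hle, eq_comm, ENNReal.ofReal_eq_zero] at ha
    exact le_antisymm hle (neg_nonpos.1 ha)
  · rw [ENNReal.ofReal_of_nonpos (neg_nonpos.2 hle), ENNReal.ofReal_eq_zero] at ha
    exact le_antisymm ha hle

end WithDensity

variable {μ ν : Measure ℝ} {f : ℝ → ℝ}

theorem isFiniteMeasure_of_zero_mem_integrableExpSet (h : 0 ∈ integrableExpSet id μ) :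
    IsFiniteMeasure μ := by
  simpa [integrableExpSet, integrable_const_iff] using h

theorem memLp_two_exp_mul {t : ℝ} (h : 2 * t ∈ integrableExpSet id μ) :
    MemLp (fun u => Real.exp (t * u)) 2 μ := by
  rw [memLp_two_iff_integrable_sq (by fun_prop)]
  simpa only [← Real.exp_nat_mul, Nat.cast_ofNat, ← mul_assoc] using! h

theorem eventually_memLp_two_exp_mul (hμ : 0 ∈ interior (integrableExpSet id μ)) :
    ∀ᶠ t : ℝ in 𝓝 0, MemLp (fun u => Real.exp (t * u)) 2 μ := by
  have hdouble : Tendsto (fun t : ℝ => 2 * t) (𝓝 0) (𝓝 0) :=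
    (by fun_prop : Continuous fun t : ℝ => 2 * t).tendsto' 0 0 (mul_zero 2)
  filter_upwards [hdouble (mem_interior_iff_mem_nhds.1 hμ)] with t ht using memLp_two_exp_mul ht

theorem memLp_two_pow (hμ : 0 ∈ interior (integrableExpSet id μ)) (n : ℕ) :
    MemLp (fun u : ℝ => u ^ n) 2 μ := by
  rw [memLp_two_iff_integrable_sq (by fun_prop)]
  simpa only [id_eq, ← pow_mul] using integrable_pow_of_mem_interior_integrableExpSet hμ (n * 2)

theorem zero_mem_interior_integrableExpSet_withDensity
    (hμ : 0 ∈ interior (integrableExpSet id μ)) (hf : MemLp f 2 μ) :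
    0 ∈ interior (integrableExpSet id (μ.withDensity fun u => ENNReal.ofReal (f u))) := by
  rw [mem_interior_iff_mem_nhds]
  filter_upwards [eventually_memLp_two_exp_mul hμ] with t ht
  exact integrable_withDensity_ofReal hf ht

theorem complexMGF_eventuallyEq_of_integral_pow_eq (hμ : 0 ∈ interior (integrableExpSet id μ))
    (hν : 0 ∈ interior (integrableExpSet id ν)) (h : ∀ n : ℕ, ∫ u, u ^ n ∂μ = ∫ u, u ^ n ∂ν) :
    complexMGF id μ =ᶠ[𝓝 0] complexMGF id ν := by
  have hderiv (n : ℕ) :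
      iteratedDeriv n (complexMGF id μ) 0 = iteratedDeriv n (complexMGF id ν) 0 := by
    have hn := congrArg ofReal (h n)
    simp only [← integral_complex_ofReal] at hn
    rw [iteratedDeriv_complexMGF (by simpa), iteratedDeriv_complexMGF (by simpa)]
    simpa using hn
  have hseries := (analyticAt_complexMGF (X := id) (μ := μ) (z := 0) (by simpa)).hasFPowerSeriesAt
  simp only [hderiv] at hseries
  filter_upwards [hseries.eventually_hasSum_sub, (analyticAt_complexMGF (X := id) (μ := ν) (z := 0)
    (by simpa)).hasFPowerSeriesAt.eventually_hasSum_sub] with z h₁ h₂ using h₁.unique h₂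

theorem measure_ext_of_integral_pow_eq (hμ : 0 ∈ interior (integrableExpSet id μ))
    (hν : 0 ∈ interior (integrableExpSet id ν)) (h : ∀ n : ℕ, ∫ u, u ^ n ∂μ = ∫ u, u ^ n ∂ν) :
    μ = ν := by
  have := isFiniteMeasure_of_zero_mem_integrableExpSet (interior_subset hμ)
  have := isFiniteMeasure_of_zero_mem_integrableExpSet (interior_subset hν)
  have hstrip : IsPreconnected
      (re ⁻¹' (interior (integrableExpSet id μ) ∩ interior (integrableExpSet id ν))) :=
    ((convex_integrableExpSet.interior.inter convex_integrableExpSet.interior).linear_preimage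
      reLm).isPreconnected
  have heq := AnalyticOnNhd.eqOn_of_preconnected_of_eventuallyEq
    (fun z hz => analyticAt_complexMGF hz.1) (fun z hz => analyticAt_complexMGF hz.2) hstrip
    (show (0 : ℂ) ∈ _ from ⟨by simpa, by simpa⟩)
    (complexMGF_eventuallyEq_of_integral_pow_eq hμ hν h)
  refine Measure.ext_of_charFun (funext fun t => ?_)
  rw [← complexMGF_id_mul_I, ← complexMGF_id_mul_I]
  exact heq ⟨by simpa, by simpa⟩

theorem ae_eq_zero_of_integral_pow_mul_eq_zero (hμ : 0 ∈ interior (integrableExpSet id μ))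
    (hf : MemLp f 2 μ) (h : ∀ n : ℕ, ∫ u, u ^ n * f u ∂μ = 0) : f =ᵐ[μ] 0 := by
  have := isFiniteMeasure_of_zero_mem_integrableExpSet (interior_subset hμ)
  refine ae_eq_zero_of_withDensity_eq_withDensity_neg hf.aemeasurable
    (measure_ext_of_integral_pow_eq (zero_mem_interior_integrableExpSet_withDensity hμ hf)
      (zero_mem_interior_integrableExpSet_withDensity hμ hf.neg) fun n => sub_eq_zero.1 ?_)
  exact (integral_mul_eq_integral_withDensity_sub hf (memLp_two_pow hμ n)).symm.trans (h n)

/-- The `j`-th Taylor coefficient at `0` of the Laplace transform `w ↦ ∫ exp (-w u) f u ∂μ`. -/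
noncomputable def laplaceCoeff (μ : Measure ℝ) (f : ℝ → ℝ) (j : ℕ) : ℝ :=
  (-1) ^ j / j.factorial * ∫ u, u ^ j * f u ∂μ

theorem eventually_hasSum_mgf (hμ : 0 ∈ interior (integrableExpSet id μ)) :
    ∀ᶠ t : ℝ in 𝓝 0, HasSum (fun j : ℕ => t ^ j / j.factorial * ∫ u, u ^ j ∂μ)
      (∫ u, Real.exp (t * u) ∂μ) := by
  filter_upwards [hasFPowerSeriesAt_iff.1 (hasFPowerSeriesAt_mgf hμ)] with t ht
  simpa [mgf, FormalMultilinearSeries.coeff_ofScalars, mul_div_assoc', div_mul_eq_mul_div] using ht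

theorem eventually_hasSum_laplaceCoeff (hμ : 0 ∈ interior (integrableExpSet id μ))
    (hf : MemLp f 2 μ) :
    ∀ᶠ w : ℝ in 𝓝 0, HasSum (fun j : ℕ => w ^ j * laplaceCoeff μ f j)
      (∫ u, Real.exp (-w * u) * f u ∂μ) := by
  have hneg : Tendsto (fun w : ℝ => -w) (𝓝 0) (𝓝 0) := continuous_neg.tendsto' 0 0 neg_zero
  filter_upwards [hneg.eventually (eventually_memLp_two_exp_mul hμ),
    hneg.eventually (eventually_hasSum_mgf (zero_mem_interior_integrableExpSet_withDensity hμ hf)),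
    hneg.eventually (eventually_hasSum_mgf
      (zero_mem_interior_integrableExpSet_withDensity hμ hf.neg))] with w hexp hpos hneg
  rw [integral_mul_eq_integral_withDensity_sub hf hexp]
  convert! hpos.sub hneg using 2 with j
  rw [← mul_sub, laplaceCoeff]
  simp only [Pi.neg_apply]
  rw [← integral_mul_eq_integral_withDensity_sub hf (memLp_two_pow hμ j), neg_pow]
  ring

end Moments

section FourierExpansion

variable {α ι : Type*} {mα : MeasurableSpace α} {μ : Measure α} {f g : α → ℝ}

theorem inner_toLp_toLp (hf : MemLp f 2 μ) (hg : MemLp g 2 μ) :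
    inner ℝ (hf.toLp f) (hg.toLp g) = ∫ a, f a * g a ∂μ := by
  rw [L2.inner_def]
  refine integral_congr_ae ?_
  filter_upwards [hf.coeFn_toLp, hg.coeFn_toLp] with a hfa hga
  simp [hfa, hga, mul_comm]

theorem norm_toLp_sq (hf : MemLp f 2 μ) : ‖hf.toLp f‖ ^ 2 = ∫ a, f a ^ 2 ∂μ := by
  rw [← real_inner_self_eq_norm_sq, inner_toLp_toLp]
  simp only [sq]

theorem toLp_sum_mul {φ : ι → α → ℝ} (hφ : ∀ i, MemLp (φ i) 2 μ) (c : ι → ℝ) (s : Finset ι) :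
    (memLp_finsetSum s fun i _ => (hφ i).const_mul (c i)).toLp (fun a => ∑ i ∈ s, c i * φ i a) =
      ∑ i ∈ s, c i • (hφ i).toLp (φ i) := by
  induction s using Finset.cons_induction with
  | empty => simp only [sum_empty]; rfl
  | cons i s hi ih =>
    simp only [sum_cons]
    rw [← ih, ← MemLp.toLp_const_smul, ← MemLp.toLp_add]
    rfl

theorem tendsto_integral_sub_sum_sq {φ : ι → α → ℝ} [DecidableEq ι] (hφ : ∀ i, MemLp (φ i) 2 μ)
    (horth : ∀ i j, ∫ a, φ i a * φ j a ∂μ = if i = j then 1 else 0)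
    (hcomplete : ∀ g, MemLp g 2 μ → (∀ i, ∫ a, φ i a * g a ∂μ = 0) → g =ᵐ[μ] 0)
    (hf : MemLp f 2 μ) :
    Tendsto (fun s : Finset ι => ∫ a, (f a - ∑ i ∈ s, (∫ b, φ i b * f b ∂μ) * φ i a) ^ 2 ∂μ)
      atTop (𝓝 0) := by
  have hon : Orthonormal ℝ fun i => (hφ i).toLp (φ i) :=
    orthonormal_iff_ite.2 fun i j => (inner_toLp_toLp (hφ i) (hφ j)).trans (horth i j)
  have hdense : (Submodule.span ℝ (Set.range fun i => (hφ i).toLp (φ i)))ᗮ = ⊥ := by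
    refine (Submodule.eq_bot_iff _).2 fun g hg => (Lp.eq_zero_iff_ae_eq_zero).2 ?_
    refine hcomplete g (Lp.memLp g) fun i => ?_
    rw [← inner_toLp_toLp (hφ i) (Lp.memLp g), Lp.toLp_coeFn]
    exact (Submodule.mem_orthogonal _ _).1 hg _ (Submodule.subset_span ⟨i, rfl⟩)
  have hsum := (HilbertBasis.mkOfOrthogonalEqBot hon hdense).hasSum_repr (hf.toLp f)
  simp only [HilbertBasis.repr_apply_apply, HilbertBasis.coe_mkOfOrthogonalEqBot,
    inner_toLp_toLp] at hsum
  have hlim := ((tendsto_const_nhds (x := hf.toLp f)).sub hsum).norm.pow 2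
  rw [sub_self, norm_zero, zero_pow two_ne_zero] at hlim
  refine hlim.congr fun s => ?_
  rw [← toLp_sum_mul hφ, ← MemLp.toLp_sub, norm_toLp_sq]
  rfl

end FourierExpansion

section Binomial

variable {R : Type*}

theorem sum_neg_one_pow_mul_choose_mul_choose [CommRing R] (n m : ℕ) :
    ∑ j ∈ range (n + 1), (-1 : R) ^ j * n.choose j * j.choose m =
      if n = m then (-1) ^ n else 0 := by
  have hdiff := congrArg (fun z : ℤ => (-1 : R) ^ n * z) (fwdDiff_iter_choose_zero m n)
  simp only [fwdDiff_iter_eq_sum_shift, smul_eq_mul, mul_one, zero_add, Int.cast_sum,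
    mul_sum] at hdiff
  refine Eq.trans (sum_congr rfl fun j hj => ?_) (hdiff.trans (by split_ifs <;> simp))
  obtain ⟨d, rfl⟩ := Nat.exists_eq_add_of_le (mem_range_succ_iff.1 hj)
  have hd : (-1 : R) ^ d * (-1) ^ d = 1 := by rw [← mul_pow]; simp
  rw [Nat.add_sub_cancel_left, pow_add]
  push_cast
  linear_combination (-(-1 : R) ^ j * (j + d).choose j * j.choose m) * hd

theorem choose_add_left_eq_sum (i j : ℕ) :
    (i + j).choose i = ∑ m ∈ range (i + 1), i.choose m * j.choose m := by
  rw [Nat.add_choose_eq, Nat.sum_antidiagonal_eq_sum_range_succ_mk, ← sum_range_reflect]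
  refine sum_congr rfl fun m hm => ?_
  have hm := mem_range_succ_iff.1 hm
  simp only [Nat.succ_eq_add_one, Nat.add_sub_cancel, Nat.choose_symm hm, Nat.sub_sub_self hm]

theorem sum_neg_one_pow_mul_choose_mul_choose_add [CommRing R] (n i : ℕ) :
    ∑ j ∈ range (n + 1), (-1 : R) ^ j * n.choose j * (i + j).choose i =
      (-1) ^ n * i.choose n := by
  simp only [choose_add_left_eq_sum, Nat.cast_sum, Nat.cast_mul, mul_sum]
  rw [sum_comm]
  simp only [mul_left_comm _ (Nat.cast (i.choose _)), ← mul_sum,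
    sum_neg_one_pow_mul_choose_mul_choose, mul_ite, mul_zero, sum_ite_eq, mem_range_succ_iff]
  split_ifs with h
  · rw [mul_comm]
  · rw [Nat.choose_eq_zero_of_lt (not_le.1 h), Nat.cast_zero, mul_zero]

theorem eq_zero_of_sum_choose_mul_eq_zero [NonAssocSemiring R] {b : ℕ → R}
    (h : ∀ n, ∑ j ∈ range (n + 1), n.choose j * b j = 0) (n : ℕ) : b n = 0 := by
  induction n using Nat.strong_induction_on with
  | _ n ih =>
    have hn := h n
    rwa [sum_range_succ, sum_eq_zero fun j hj => by rw [ih j (mem_range.1 hj), mul_zero],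
      zero_add, Nat.choose_self, Nat.cast_one, one_mul] at hn

end Binomial

section ExponentialDistribution

open ProbabilityTheory

theorem integrableOn_pow_mul_exp (j : ℕ) {c : ℝ} (hc : 0 < c) :
    IntegrableOn (fun u : ℝ => u ^ j * Real.exp (-(c * u))) (Set.Ioi 0) := by
  simpa using integrableOn_rpow_mul_exp_neg_mul_rpow (p := 1) (s := j)
    (neg_one_lt_zero.trans_le j.cast_nonneg) one_pos hc

theorem integral_pow_mul_exp (j : ℕ) {c : ℝ} (hc : 0 < c) :
    ∫ u in Set.Ioi (0 : ℝ), u ^ j * Real.exp (-(c * u)) = j.factorial / c ^ (j + 1) := by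
  have h := Real.integral_rpow_mul_exp_neg_mul_Ioi (Nat.cast_add_one_pos j) hc
  rw [Real.Gamma_nat_eq_factorial, ← Nat.cast_add_one, Real.rpow_natCast] at h
  simpa [div_eq_inv_mul] using h

variable {E : Type*} [NormedAddCommGroup E] [NormedSpace ℝ E] {r : ℝ}

theorem expMeasure_eq_withDensity (r : ℝ) :
    expMeasure r = (volume.restrict (Set.Ioi 0)).withDensity
      fun u => ENNReal.ofReal (r * Real.exp (-(r * u))) := by
  rw [Measure.restrict_congr_set Ioi_ae_eq_Ici, ← withDensity_indicator measurableSet_Ici]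
  refine congrArg volume.withDensity (funext fun u => ?_)
  simp [gammaPDF_eq, Set.indicator_apply, apply_ite ENNReal.ofReal]

theorem integral_expMeasure (hr : 0 ≤ r) (g : ℝ → E) :
    ∫ u, g u ∂expMeasure r = ∫ u in Set.Ioi 0, (r * Real.exp (-(r * u))) • g u := by
  rw [expMeasure_eq_withDensity,
    integral_withDensity_eq_integral_toReal_smul (by fun_prop) (by simp)]
  simp only [ENNReal.toReal_ofReal (mul_nonneg hr (Real.exp_pos _).le)]

theorem integrable_expMeasure_iff (hr : 0 ≤ r) {g : ℝ → E} :
    Integrable g (expMeasure r) ↔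
      IntegrableOn (fun u => (r * Real.exp (-(r * u))) • g u) (Set.Ioi 0) := by
  rw [expMeasure_eq_withDensity,
    integrable_withDensity_iff_integrable_smul' (by fun_prop) (by simp)]
  simp only [ENNReal.toReal_ofReal (mul_nonneg hr (Real.exp_pos _).le), IntegrableOn]

theorem Iio_subset_integrableExpSet_expMeasure (hr : 0 ≤ r) :
    Set.Iio r ⊆ integrableExpSet id (expMeasure r) := by
  intro t ht
  refine (integrable_expMeasure_iff hr).2 (IntegrableOn.congr_fun
    ((integrableOn_pow_mul_exp 0 (sub_pos.2 ht)).const_mul r) (fun u _ => ?_) measurableSet_Ioi)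
  simp only [pow_zero, one_mul, id_eq, smul_eq_mul, mul_assoc, ← Real.exp_add]
  ring_nf

theorem zero_mem_interior_integrableExpSet_expMeasure (hr : 0 < r) :
    0 ∈ interior (integrableExpSet id (expMeasure r)) :=
  interior_maximal (Iio_subset_integrableExpSet_expMeasure hr.le) isOpen_Iio hr

theorem integral_pow_expMeasure (hr : 0 < r) (n : ℕ) :
    ∫ u, u ^ n ∂expMeasure r = n.factorial / r ^ n := by
  rw [integral_expMeasure hr.le]
  simp only [smul_eq_mul, mul_assoc, mul_comm (Real.exp _)]
  rw [integral_const_mul, integral_pow_mul_exp n hr, pow_succ']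
  field_simp

end ExponentialDistribution

section Laguerre

open ProbabilityTheory

variable {μ : Measure ℝ} {f : ℝ → ℝ}

theorem laguerre_eq_sum (n : ℕ) (u : ℝ) :
    laguerre n u = ∑ j ∈ range (n + 1), n.choose j * ((-1) ^ j / j.factorial * u ^ j) :=
  sum_congr rfl fun j _ => by ring

theorem memLp_two_laguerre (hμ : 0 ∈ interior (integrableExpSet id μ)) (n : ℕ) :
    MemLp (laguerre n) 2 μ := by
  simp only [funext (laguerre_eq_sum n)]
  exact memLp_finsetSum _ fun j _ => ((memLp_two_pow hμ j).const_mul _).const_mul _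

theorem integral_laguerre_mul (hμ : 0 ∈ interior (integrableExpSet id μ)) (hf : MemLp f 2 μ)
    (n : ℕ) :
    ∫ u, laguerre n u * f u ∂μ = ∑ j ∈ range (n + 1), n.choose j * laplaceCoeff μ f j := by
  simp only [laguerre_eq_sum, sum_mul, mul_assoc, laplaceCoeff, ← integral_const_mul]
  exact integral_finsetSum _ fun j _ =>
    (((memLp_two_pow hμ j).integrable_mul hf).const_mul _).const_mul _

theorem laplaceCoeff_laguerre (n i : ℕ) :
    laplaceCoeff (expMeasure 1) (laguerre n) i = (-1) ^ i * ((-1) ^ n * i.choose n) := by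
  have hμ := zero_mem_interior_integrableExpSet_expMeasure one_pos
  have hmoment : ∫ u, laguerre n u * u ^ i ∂expMeasure 1 =
      i.factorial * ∑ j ∈ range (n + 1), (-1 : ℝ) ^ j * n.choose j * (i + j).choose i := by
    rw [integral_laguerre_mul hμ (memLp_two_pow hμ i), mul_sum]
    refine sum_congr rfl fun j _ => ?_
    simp only [laplaceCoeff, ← pow_add, integral_pow_expMeasure one_pos, one_pow, div_one]
    rw [Nat.cast_add_choose, add_comm j]
    field_simp
  simp only [laplaceCoeff, mul_comm (_ ^ i) (laguerre n _), hmoment,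
    sum_neg_one_pow_mul_choose_mul_choose_add]
  field_simp

theorem integral_laguerre_mul_laguerre (m n : ℕ) :
    ∫ u, laguerre m u * laguerre n u ∂expMeasure 1 = if m = n then 1 else 0 := by
  have hμ := zero_mem_interior_integrableExpSet_expMeasure one_pos
  rw [integral_laguerre_mul hμ (memLp_two_laguerre hμ n)]
  calc ∑ i ∈ range (m + 1), m.choose i * laplaceCoeff (expMeasure 1) (laguerre n) i
      = (-1) ^ n * ∑ i ∈ range (m + 1), (-1 : ℝ) ^ i * m.choose i * i.choose n := by
        rw [mul_sum]
        exact sum_congr rfl fun i _ => by rw [laplaceCoeff_laguerre]; ring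
    _ = if m = n then 1 else 0 := by
        rw [sum_neg_one_pow_mul_choose_mul_choose, mul_ite, mul_zero]
        split_ifs with h
        · rw [h, ← mul_pow, neg_one_mul, neg_neg, one_pow]
        · rfl

theorem ae_eq_zero_of_integral_laguerre_mul_eq_zero (hμ : 0 ∈ interior (integrableExpSet id μ))
    (hf : MemLp f 2 μ) (h : ∀ n, ∫ u, laguerre n u * f u ∂μ = 0) : f =ᵐ[μ] 0 := by
  refine ae_eq_zero_of_integral_pow_mul_eq_zero hμ hf fun n => ?_
  have hcoeff : laplaceCoeff μ f n = 0 := eq_zero_of_sum_choose_mul_eq_zero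
    (fun n => (integral_laguerre_mul hμ hf n).symm.trans (h n)) n
  simpa [laplaceCoeff, Nat.factorial_ne_zero] using hcoeff

theorem tendsto_laguerre_expansion (hf : MemLp f 2 (expMeasure 1)) :
    Tendsto (fun N : ℕ => ∫ u, (f u - ∑ n ∈ range (N + 1),
      (∫ v, laguerre n v * f v ∂expMeasure 1) * laguerre n u) ^ 2 ∂expMeasure 1) atTop (𝓝 0) := by
  have hμ := zero_mem_interior_integrableExpSet_expMeasure one_pos
  exact (tendsto_integral_sub_sum_sq (memLp_two_laguerre hμ) integral_laguerre_mul_laguerre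
    (fun _ hg => ae_eq_zero_of_integral_laguerre_mul_eq_zero hμ hg) hf).comp
    (tendsto_finset_range.comp (tendsto_add_atTop_nat 1))

end Laguerre

section ChangeOfVariables

open ProbabilityTheory

theorem integral_comp_exp_Ioi_zero {E : Type*} [NormedAddCommGroup E] [NormedSpace ℝ E]
    (g : ℝ → E) :
    ∫ u in Set.Ioi (0 : ℝ), Real.exp u • g (Real.exp u) = ∫ x in Set.Ioi 1, g x := by
  rw [integral_comp_exp_Ioi, Real.exp_zero]

theorem integral_div_sq_Ioi_one (g : ℝ → ℝ) :
    ∫ x in Set.Ioi 1, g x / x ^ 2 = ∫ u, g (Real.exp u) ∂expMeasure 1 := by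
  rw [integral_expMeasure zero_le_one, ← integral_comp_exp_Ioi_zero]
  refine setIntegral_congr_fun measurableSet_Ioi fun u _ => ?_
  simp only [smul_eq_mul, one_mul, Real.exp_neg]
  field_simp

theorem integrableOn_div_sq_Ioi_one_iff {g : ℝ → ℝ} :
    IntegrableOn (fun x => g x / x ^ 2) (Set.Ioi 1) ↔
      Integrable (fun u => g (Real.exp u)) (expMeasure 1) := by
  have hsubst := integrableOn_comp_exp_Ioi (fun x => g x / x ^ 2) 0
  rw [Real.exp_zero] at hsubst
  rw [integrable_expMeasure_iff zero_le_one, ← hsubst]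
  refine integrableOn_congr_fun (fun u _ => ?_) measurableSet_Ioi
  simp only [smul_eq_mul, one_mul, Real.exp_neg]
  field_simp

theorem memLp_two_comp_exp_iff {g : ℝ → ℝ} (hg : Measurable g) :
    MemLp (fun u => g (Real.exp u)) 2 (expMeasure 1) ↔
      IntegrableOn (fun x => g x ^ 2 / x ^ 2) (Set.Ioi 1) := by
  have hcomp : Measurable fun u => g (Real.exp u) := hg.comp Real.measurable_exp
  rw [integrableOn_div_sq_Ioi_one_iff, memLp_two_iff_integrable_sq hcomp.aestronglyMeasurable]

end ChangeOfVariables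

section DirichletSeries

theorem LSeriesHasSum_delta (s : ℂ) : LSeriesHasSum LSeries.delta s 1 := by
  rw [LSeriesHasSum, funext (LSeries.term_delta s)]
  exact hasSum_ite_eq 1 1

theorem LSeriesHasSum_dk (k : ℕ) {s : ℂ} (hs : 1 < s.re) :
    LSeriesHasSum (fun n => (dk k n : ℂ)) s (riemannZeta s ^ k) := by
  induction k with
  | zero =>
    have hdk : (fun n => (dk 0 n : ℂ)) = LSeries.delta := by
      funext n
      simp [dk, LSeries.delta, ArithmeticFunction.one_apply]
    rw [hdk, pow_zero]
    exact LSeriesHasSum_delta s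
  | succ k ih =>
    have hmul := ArithmeticFunction.LSeriesHasSum_mul
      (f := ((ArithmeticFunction.zeta ^ k : ArithmeticFunction ℕ) : ArithmeticFunction ℂ))
      (g := (ArithmeticFunction.zeta : ArithmeticFunction ℂ))
      ih (ArithmeticFunction.LSeriesHasSum_zeta hs)
    rw [← ArithmeticFunction.natCoe_mul, ← pow_succ, ← pow_succ] at hmul
    exact hmul

theorem isBigO_rpow_sum_norm_of_LSeriesSummable {f : ℕ → ℂ} {r : ℝ} (hr : 0 ≤ r)
    (hf : LSeriesSummable f r) :
    (fun n : ℕ => ∑ j ∈ Icc 1 n, ‖f j‖) =O[atTop] fun n : ℕ => (n : ℝ) ^ r := by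
  refine IsBigO.of_bound (∑' j, ‖LSeries.term f r j‖) (.of_forall fun n => ?_)
  rw [Real.norm_of_nonneg (by positivity), Real.norm_of_nonneg (by positivity)]
  calc ∑ j ∈ Icc 1 n, ‖f j‖
      ≤ ∑ j ∈ Icc 1 n, ‖LSeries.term f r j‖ * (n : ℝ) ^ r := by
        refine sum_le_sum fun j hj => ?_
        obtain ⟨hj_pos, hj_le⟩ := mem_Icc.1 hj
        rw [LSeries.norm_term_eq, if_neg (Nat.one_le_iff_ne_zero.1 hj_pos), ofReal_re,
          div_mul_eq_mul_div, le_div_iff₀ (by positivity)]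
        gcongr
    _ ≤ (∑' j, ‖LSeries.term f r j‖) * (n : ℝ) ^ r := by
        rw [← sum_mul]
        gcongr
        exact hf.norm.sum_le_tsum _ fun _ _ => norm_nonneg _

theorem LSeries_eq_mul_integral_exp {f : ℕ → ℂ} {r : ℝ} (hr : 0 ≤ r) (hf : LSeriesSummable f r)
    {s : ℂ} (hs : r < s.re) :
    LSeries f s =
      s * ∫ u in Set.Ioi (0 : ℝ), cexp (-s * u) * ∑ n ∈ Icc 1 ⌊Real.exp u⌋₊, f n := by
  rw [LSeries_eq_mul_integral' f hr hs (isBigO_rpow_sum_norm_of_LSeriesSummable hr hf),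
    ← integral_comp_exp_Ioi_zero]
  refine congrArg (s * ·) (setIntegral_congr_fun measurableSet_Ioi fun u _ => ?_)
  have hpow : (Real.exp u : ℂ) ^ (-(s + 1)) = cexp (-s * u) * cexp (-u) := by
    rw [ofReal_exp, ← Complex.exp_add, cpow_def_of_ne_zero (Complex.exp_ne_zero _), ← ofReal_exp,
      ← ofReal_log (Real.exp_pos u).le, Real.log_exp]
    ring_nf
  have hcancel : cexp u * cexp (-u) = 1 := by rw [← Complex.exp_add, add_neg_cancel, exp_zero]
  rw [hpow, real_smul, ofReal_exp]
  linear_combination (cexp (-s * u) * ∑ n ∈ Icc 1 ⌊Real.exp u⌋₊, f n) * hcancel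

end DirichletSeries

section PiltzErrorTerm

open ProbabilityTheory

variable {w : ℝ}

theorem integral_exp_mul_sum_dk (k : ℕ) (hw : 0 < w) :
    ∫ u, Real.exp (-w * u) * ∑ n ∈ Icc 1 ⌊Real.exp u⌋₊, (dk k n : ℝ) ∂expMeasure 1 =
      (riemannZeta (1 + w) ^ k).re / (1 + w) := by
  have hdk {t : ℝ} (ht : 0 < t) := LSeriesHasSum_dk k (s := ((1 + t : ℝ) : ℂ)) (by simpa using ht)
  have hlaplace := LSeries_eq_mul_integral_exp (by positivity) (hdk (half_pos hw)).LSeriesSummable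
    (s := ((1 + w : ℝ) : ℂ)) (by simpa using hw)
  have hreal (u : ℝ) : cexp (-((1 + w : ℝ) : ℂ) * u) * ∑ n ∈ Icc 1 ⌊Real.exp u⌋₊, (dk k n : ℂ) =
      ((Real.exp (-(1 + w) * u) * ∑ n ∈ Icc 1 ⌊Real.exp u⌋₊, (dk k n : ℝ) : ℝ) : ℂ) := by
    push_cast
    rfl
  simp only [(hdk hw).LSeries_eq, hreal, integral_complex_ofReal, ← ofReal_mul] at hlaplace
  rw [← ofReal_one, ← ofReal_add, hlaplace, ofReal_re, mul_div_cancel_left₀ _ (by positivity),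
    integral_expMeasure zero_le_one]
  refine setIntegral_congr_fun measurableSet_Ioi fun u _ => ?_
  simp only [smul_eq_mul, one_mul, ← mul_assoc, ← Real.exp_add]
  ring_nf

variable (a : ℕ → ℝ) (m : ℕ)

theorem smul_exp_mul_exp_mul_sum_pow (w u : ℝ) :
    (1 * Real.exp (-(1 * u))) •
        (Real.exp (-w * u) * (Real.exp u * ∑ j ∈ range m, a j / j.factorial * u ^ j)) =
      ∑ j ∈ range m, a j / j.factorial * (u ^ j * Real.exp (-(w * u))) := by
  have hcancel : Real.exp (-u) * Real.exp u = 1 := by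
    rw [← Real.exp_add, neg_add_cancel, Real.exp_zero]
  simp only [one_mul, smul_eq_mul, neg_mul, ← mul_assoc, ← sum_mul]
  linear_combination
    (Real.exp (-(w * u)) * ∑ j ∈ range m, a j / j.factorial * u ^ j) * hcancel

theorem integrable_exp_mul_exp_mul_sum_pow (hw : 0 < w) :
    Integrable (fun u => Real.exp (-w * u) *
      (Real.exp u * ∑ j ∈ range m, a j / j.factorial * u ^ j)) (expMeasure 1) := by
  rw [integrable_expMeasure_iff zero_le_one]
  simp only [smul_exp_mul_exp_mul_sum_pow]
  exact integrable_finsetSum _ fun j _ => (integrableOn_pow_mul_exp j hw).const_mul _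

theorem integral_exp_mul_exp_mul_sum_pow (hw : 0 < w) :
    ∫ u, Real.exp (-w * u) * (Real.exp u * ∑ j ∈ range m, a j / j.factorial * u ^ j)
      ∂expMeasure 1 = ∑ j ∈ range m, a j / w ^ (j + 1) := by
  rw [integral_expMeasure zero_le_one]
  simp only [smul_exp_mul_exp_mul_sum_pow]
  rw [integral_finsetSum _ fun j _ => (integrableOn_pow_mul_exp j hw).const_mul _]
  refine sum_congr rfl fun j _ => ?_
  rw [integral_const_mul, integral_pow_mul_exp j hw]
  field_simp

theorem measurable_Deltak (k : ℕ) : Measurable (Deltak k) := by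
  have hsum : Measurable fun x : ℝ => ∑ n ∈ Icc 1 ⌊x⌋₊, (dk k n : ℝ) :=
    (measurable_from_nat (f := fun m => ∑ n ∈ Icc 1 m, (dk k n : ℝ))).comp Nat.measurable_floor
  unfold Deltak
  fun_prop

theorem integral_exp_mul_Deltak_exp {k : ℕ}
    (hΔ : MemLp (fun u => Deltak k (Real.exp u)) 2 (expMeasure 1)) (hw : 0 < w) :
    ∫ u, Real.exp (-w * u) * Deltak k (Real.exp u) ∂expMeasure 1 =
      (riemannZeta (1 + w) ^ k).re / (1 + w) - ∑ j ∈ range k, aCoef k j / w ^ (j + 1) := by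
  have hexp : MemLp (fun u => Real.exp (-w * u)) 2 (expMeasure 1) :=
    memLp_two_exp_mul (Iio_subset_integrableExpSet_expMeasure zero_le_one
      (Set.mem_Iio.2 (by linarith)))
  have hint : Integrable (fun u => Real.exp (-w * u) * Deltak k (Real.exp u)) (expMeasure 1) :=
    hexp.integrable_mul hΔ
  rw [← integral_exp_mul_sum_dk k hw, ← integral_exp_mul_exp_mul_sum_pow (aCoef k) k hw,
    eq_sub_iff_add_eq, ← integral_add hint (integrable_exp_mul_exp_mul_sum_pow (aCoef k) k hw)]
  simp only [← mul_add, Deltak, Real.log_exp, sub_add_cancel]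

end PiltzErrorTerm

section LaurentCoefficients

open ProbabilityTheory

theorem eq_of_eventually_hasSum_pow_mul {f : ℝ → ℝ} {b c : ℕ → ℝ}
    (hb : ∀ᶠ w in 𝓝[>] (0 : ℝ), HasSum (fun n => w ^ n * b n) (f w))
    (hc : ∀ᶠ w in 𝓝[>] (0 : ℝ), HasSum (fun n => w ^ n * c n) (f w)) : b = c := by
  set p := FormalMultilinearSeries.ofScalars ℝ (b - c)
  have hzero : ∀ᶠ w in 𝓝[>] (0 : ℝ), HasSum (fun n => w ^ n * (b - c) n) 0 := by
    filter_upwards [hb, hc] with w hbw hcw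
    simpa only [Pi.sub_apply, mul_sub, sub_self] using hbw.sub hcw
  have hradius : 0 < p.radius := by
    obtain ⟨w, hw, hw_pos⟩ := (hzero.and self_mem_nhdsWithin).exists
    lift w to NNReal using le_of_lt hw_pos
    refine (ENNReal.coe_pos.2 hw_pos).trans_le (p.le_radius_of_summable_norm ?_)
    simpa [p, FormalMultilinearSeries.ofScalars_norm, mul_comm] using hw.summable.norm
  have hp := (p.hasFPowerSeriesOnBall hradius).hasFPowerSeriesAt
  have hsum : ∀ᶠ w in 𝓝[>] (0 : ℝ), p.sum w = 0 := by
    filter_upwards [hzero] with w hw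
    simpa [p, FormalMultilinearSeries.sum, mul_comm] using hw.tsum_eq
  have hsum_ne : ∃ᶠ w in 𝓝[≠] (0 : ℝ), p.sum w = 0 :=
    hsum.frequently.filter_mono (nhdsWithin_mono 0 fun w (hw : 0 < w) => hw.ne')
  have hp_zero : p = 0 := HasFPowerSeriesAt.eq_zero
    (hp.congr (hp.analyticAt.frequently_zero_iff_eventually_zero.1 hsum_ne))
  rw [← sub_eq_zero]
  exact (FormalMultilinearSeries.ofScalars_series_eq_zero ℝ).1 hp_zero

theorem hasSum_pow_mul_neg_one_pow_mul_sum {b : ℕ → ℝ} {w S : ℝ} (hw : |w| < 1)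
    (hb : HasSum (fun n => w ^ n * b n) S) :
    HasSum (fun n => w ^ n * ((-1) ^ n * ∑ i ∈ range (n + 1), (-1) ^ i * b i)) (S / (1 + w)) := by
  have hgeom := hasSum_geometric_of_abs_lt_one (r := -w) (by rwa [abs_neg])
  convert! hasSum_sum_range_mul_of_summable_norm hb.summable.norm hgeom.summable.norm
    using 1 with n
  · funext n
    rw [mul_sum, mul_sum]
    refine sum_congr rfl fun i hi => ?_
    obtain ⟨d, rfl⟩ := Nat.exists_eq_add_of_le (mem_range_succ_iff.1 hi)
    rw [add_tsub_cancel_left, neg_pow w, pow_add, pow_add]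
    have hsign : (-1 : ℝ) ^ i * (-1) ^ i = 1 := by rw [← mul_pow]; norm_num
    linear_combination (w ^ i * w ^ d * (-1) ^ d * b i) * hsign
  · rw [hb.tsum_eq, hgeom.tsum_eq, sub_neg_eq_add, div_eq_mul_inv]

theorem analyticAt_zetaPowAux (k : ℕ) : AnalyticAt ℂ (zetaPowAux k) 1 := by
  refine analyticAt_of_differentiable_on_punctured_nhds_of_continuousAt ?_ ?_
  · filter_upwards [self_mem_nhdsWithin] with z hz
    have hdiff : DifferentiableAt ℂ (fun s : ℂ => ((s - 1) * riemannZeta s) ^ k) z :=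
      ((differentiableAt_id.sub_const 1).mul (differentiableAt_riemannZeta hz)).pow k
    refine hdiff.congr_of_eventuallyEq ?_
    filter_upwards [isOpen_ne.mem_nhds hz] with s hs
    exact Function.update_of_ne hs _ _
  · rw [zetaPowAux, continuousAt_update_same]
    simpa using riemannZeta_residue_one.pow k

theorem zetaPowAux_one_add (k : ℕ) {w : ℂ} (hw : w ≠ 0) :
    zetaPowAux k (1 + w) = w ^ k * riemannZeta (1 + w) ^ k := by
  rw [zetaPowAux, Function.update_of_ne (by simpa using hw), add_sub_cancel_left, mul_pow]

theorem eventually_hasSum_lam (k : ℕ) :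
    ∀ᶠ w in 𝓝[>] (0 : ℝ), HasSum (fun n => w ^ n * (lam k n / n.factorial))
      (w ^ k * (riemannZeta (1 + w) ^ k).re) := by
  have hcast : Tendsto (fun w : ℝ => (w : ℂ)) (𝓝[>] 0) (𝓝 0) :=
    (continuous_ofReal.tendsto' 0 0 ofReal_zero).mono_left nhdsWithin_le_nhds
  filter_upwards [hcast.eventually (hasFPowerSeriesAt_iff.1
    (analyticAt_zetaPowAux k).hasFPowerSeriesAt), self_mem_nhdsWithin] with w hw hw_pos
  rw [zetaPowAux_one_add k (ofReal_ne_zero.2 (ne_of_gt hw_pos))] at hw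
  convert! hasSum_re hw using 2 with n
  · rw [FormalMultilinearSeries.coeff_ofScalars, smul_eq_mul, ← ofReal_pow, re_ofReal_mul,
      ← ofReal_natCast, div_ofReal_re, lam]
  · rw [← ofReal_pow, re_ofReal_mul]

/-- The `n`-th Taylor coefficient at `w = 0` of `w ^ k * ζ(1 + w) ^ k / (1 + w)`: for `n < k` it
belongs to the polar part of `ζ(1 + w) ^ k / (1 + w)`, for `n ≥ k` to the regular part. -/
noncomputable def zetaQuotCoeff (k n : ℕ) : ℝ :=
  (-1) ^ n * ∑ i ∈ range (n + 1), (-1) ^ i * lam k i / i.factorial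

theorem zetaQuotCoeff_add_zetaQuotCoeff_succ (k n : ℕ) :
    zetaQuotCoeff k n + zetaQuotCoeff k (n + 1) = lam k (n + 1) / (n + 1).factorial := by
  have hsign : (-1 : ℝ) ^ n * (-1) ^ n = 1 := by rw [← mul_pow]; norm_num
  simp only [zetaQuotCoeff, sum_range_succ _ (n + 1), pow_succ]
  linear_combination (lam k (n + 1) / (n + 1).factorial) * hsign

theorem eventually_hasSum_zetaQuotCoeff (k : ℕ) :
    ∀ᶠ w in 𝓝[>] (0 : ℝ), HasSum (fun n => w ^ n * zetaQuotCoeff k n)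
      (w ^ k * (riemannZeta (1 + w) ^ k).re / (1 + w)) := by
  have hsmall : ∀ᶠ w in 𝓝[>] (0 : ℝ), |w| < 1 :=
    nhdsWithin_le_nhds (continuous_abs.continuousAt.eventually_lt_const (by simp))
  filter_upwards [eventually_hasSum_lam k, hsmall] with w hlam hw
  simpa only [zetaQuotCoeff, mul_div_assoc] using hasSum_pow_mul_neg_one_pow_mul_sum hw hlam

theorem pow_mul_sum_aCoef_div_pow (k : ℕ) {w : ℝ} (hw : w ≠ 0) :
    w ^ k * ∑ j ∈ range k, aCoef k j / w ^ (j + 1) =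
      ∑ n ∈ range k, w ^ n * zetaQuotCoeff k n := by
  rw [mul_sum, ← sum_range_reflect]
  refine sum_congr rfl fun n hn => ?_
  obtain ⟨d, rfl⟩ := Nat.exists_eq_add_of_lt (mem_range.1 hn)
  have hreflect : n + d + 1 - 1 - n = d := by omega
  have hreflect_reflect : n + d + 1 - 1 - d = n := by omega
  have hcoef : aCoef (n + d + 1) d = zetaQuotCoeff (n + d + 1) n := by
    rw [aCoef, zetaQuotCoeff, hreflect_reflect]
  rw [hreflect, hcoef]
  field_simp
  ring

theorem eventually_hasSum_zetaQuotCoeff_add (k : ℕ) :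
    ∀ᶠ w in 𝓝[>] (0 : ℝ), HasSum (fun n => w ^ n * zetaQuotCoeff k (n + k))
      ((riemannZeta (1 + w) ^ k).re / (1 + w) - ∑ j ∈ range k, aCoef k j / w ^ (j + 1)) := by
  filter_upwards [eventually_hasSum_zetaQuotCoeff k, self_mem_nhdsWithin] with w hsum hw_pos
  have hw : w ≠ 0 := ne_of_gt hw_pos
  have htail := (hasSum_nat_add_iff' k).2 hsum
  rw [← pow_mul_sum_aCoef_div_pow k hw, mul_div_assoc, ← mul_sub] at htail
  rw [← hasSum_mul_left_iff (pow_ne_zero k hw)]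
  simpa only [← mul_assoc, ← pow_add, add_comm k] using htail

theorem laplaceCoeff_Deltak_exp {k : ℕ}
    (hΔ : MemLp (fun u => Deltak k (Real.exp u)) 2 (expMeasure 1)) :
    laplaceCoeff (expMeasure 1) (fun u => Deltak k (Real.exp u)) =
      fun n => zetaQuotCoeff k (n + k) := by
  refine eq_of_eventually_hasSum_pow_mul (nhdsWithin_le_nhds (eventually_hasSum_laplaceCoeff
    (zero_mem_interior_integrableExpSet_expMeasure zero_lt_one) hΔ)) ?_
  filter_upwards [eventually_hasSum_zetaQuotCoeff_add k, self_mem_nhdsWithin] with w hw hw_pos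
  rwa [integral_exp_mul_Deltak_exp hΔ hw_pos]

theorem neg_one_pow_mul_ell (k n : ℕ) :
    (-1) ^ n * ell k n = ∑ j ∈ range (n + 1), (n.choose j : ℝ) * zetaQuotCoeff k (j + k) := by
  cases n with
  | zero => simp [ell, zetaQuotCoeff]
  | succ n =>
    have hsign : (-1 : ℝ) ^ (n + 1) * (-1) ^ (n + 1) = 1 := by rw [← mul_pow]; norm_num
    have hIcc : Icc 1 (n + 1) = Ico (0 + 1) (n + 1 + 1) := rfl
    rw [ell, if_pos (by lia), Int.toNat_natCast, ← mul_assoc, hsign, one_mul, hIcc,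
      ← sum_Ico_add', ← range_eq_Ico, sum_choose_succ_mul fun i _ => zetaQuotCoeff k (i + k),
      ← sum_add_distrib]
    refine sum_congr rfl fun j _ => ?_
    rw [← mul_add, add_right_comm j 1 k, zetaQuotCoeff_add_zetaQuotCoeff_succ,
      Nat.add_sub_cancel, Nat.add_sub_cancel, mul_div_assoc]

theorem integral_laguerre_mul_Deltak_exp {k : ℕ}
    (hΔ : MemLp (fun u => Deltak k (Real.exp u)) 2 (expMeasure 1)) (n : ℕ) :
    ∫ u, laguerre n u * Deltak k (Real.exp u) ∂expMeasure 1 = (-1) ^ n * ell k n := by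
  rw [integral_laguerre_mul (zero_mem_interior_integrableExpSet_expMeasure zero_lt_one) hΔ,
    laplaceCoeff_Deltak_exp hΔ, neg_one_pow_mul_ell]

end LaurentCoefficients

theorem stmt13 (k : ℕ) (hk : 0 < k)
    (h : IntegrableOn (fun x : ℝ => (Deltak k x) ^ 2 / x ^ 2) (Set.Ioi 1)) :
    Tendsto (fun N : ℕ => ∫ x in Set.Ioi (1 : ℝ),
        (Deltak k x -
          ∑ n ∈ Finset.range (N + 1), (-1 : ℝ) ^ n * ell k n * laguerre n (Real.log x)) ^ 2
          / x ^ 2)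
      atTop (𝓝 0) := by
  have hΔ : MemLp (fun u => Deltak k (Real.exp u)) 2 (ProbabilityTheory.expMeasure 1) :=
    (memLp_two_comp_exp_iff (measurable_Deltak k)).2 h
  refine (tendsto_laguerre_expansion hΔ).congr fun N => ?_
  rw [integral_div_sq_Ioi_one]
  simp only [integral_laguerre_mul_Deltak_exp hΔ, Real.log_exp]
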